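/- Let Γ be a finite extensive-form game with perfect recall. A behavioral strategy profile β* is a Nash equilibrium in behavioral strategies if and only if there exist a behavioral strategy profile β̃*, a belief system μ*, and multipliers λ*, λ̃*, ζ*, ζ̃* such that (β*, β̃*, μ*, λ*, λ̃*, ζ*, ζ̃*) solves the system: ω(I_i^j|β) u^i(a, ϱ^i_{I_i^j}(β^{-I_i^j}, β̃), μ | I_i^j) + λ^i_{I_i^j}(a) − ζ^i_{I_i^j} = 0 and u^i(a, ϱ^i_{I_i^j}(β^{-I_i^j}, β̃), μ | I_i^j) + λ̃^i_{I_i^j}(a) − ζ̃^i_{I_i^j} = 0 for all i ∈ N, j ∈ M_i, a ∈ A(I_i^j); S^i(I_i^j|β) μ^i_{I_i^j}(h) = S^i(h|β) and μ^i_{I_i^j}(h) ≥ 0 for all i, j, h ∈ I_i^j; Σ_{h ∈ I_i^j} μ^i_{I_i^j}(h) = 1, Σ_{a ∈ A(I_i^j)} β^i_{I_i^j}(a) = 1, Σ_{a ∈ A(I_i^j)} β̃^i_{I_i^j}(a) = 1 for all i, j; β^i_{I_i^j}(a) λ^i_{I_i^j}(a) = 0, β̃^i_{I_i^j}(a) λ̃^i_{I_i^j}(a)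 = 0, and β^i_{I_i^j}(a) ≥ 0, λ^i_{I_i^j}(a) ≥ 0, β̃^i_{I_i^j}(a) ≥ 0, λ̃^i_{I_i^j}(a) ≥ 0 for all i, j, a ∈ A(I_i^j). -/

import Mathlib

open scoped Classical

noncomputable section

/-- A finite extensive-form game.  Actions are labelled by natural numbers drawn from the
finite pool `actFinset`; a history is the list of actions taken so far; players are `Fin n`
and `P h = none` means that the chance player moves after `h`.  The information sets of
player `i` are `Info i j` for `j < m i`, and `infoIdx h` is the index of the information
set containing a nonterminal history `h` at which some player moves.  Payoffs `u i h` are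
relevant on terminal histories. -/
structure EFG where
  n : ℕ
  actFinset : Finset ℕ
  H : Finset (List ℕ)
  P : List ℕ → Option (Fin n)
  fc : List ℕ → ℕ → ℝ
  m : Fin n → ℕ
  Info : Fin n → ℕ → Finset (List ℕ)
  infoIdx : List ℕ → ℕ
  u : Fin n → List ℕ → ℝ
  empty_mem : ([] : List ℕ) ∈ H
  prefixClosed : ∀ h ∈ H, ∀ h' : List ℕ, h' <+: h → h' ∈ H
  act_mem : ∀ (h : List ℕ) (a : ℕ), h ++ [a] ∈ H → a ∈ actFinset
  fc_nonneg : ∀ h a, 0 ≤ fc h a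
  fc_sum : ∀ h ∈ H, P h = none → (∃ a, h ++ [a] ∈ H) →
    ∑ a ∈ actFinset.filter (fun a => h ++ [a] ∈ H), fc h a = 1
  info_spec : ∀ (i : Fin n) (j : ℕ) (h : List ℕ), j < m i →
    (h ∈ Info i j ↔ h ∈ H ∧ P h = some i ∧ (∃ a, h ++ [a] ∈ H) ∧ infoIdx h = j)
  infoIdx_lt : ∀ (i : Fin n), ∀ h ∈ H, P h = some i → (∃ a, h ++ [a] ∈ H) → infoIdx h < m i
  info_nonempty : ∀ (i : Fin n) (j : ℕ), j < m i → (Info i j).Nonempty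
  info_actions : ∀ (i : Fin n) (j : ℕ), j < m i → ∀ h ∈ Info i j, ∀ h' ∈ Info i j,
    ∀ a : ℕ, (h ++ [a] ∈ H ↔ h' ++ [a] ∈ H)
  act_unique : ∀ (h h' : List ℕ) (a : ℕ), h ∈ H → h' ∈ H → h ++ [a] ∈ H → h' ++ [a] ∈ H →
    P h = P h' ∧ infoIdx h = infoIdx h'

namespace EFG

/-- Behavioral strategy profiles (player, information-set index, action ↦ probability). -/
abbrev Profile (G : EFG) : Type := Fin G.n → ℕ → ℕ → ℝ

/-- Belief systems (player, information-set index, history ↦ probability). -/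
abbrev Belief (G : EFG) : Type := Fin G.n → ℕ → List ℕ → ℝ

variable (G : EFG)

/-- The set `Z` of terminal histories. -/
def Zset : Finset (List ℕ) := G.H.filter fun h => ∀ a : ℕ, h ++ [a] ∉ G.H

/-- The set `A(h)` of actions available after a history. -/
def A (h : List ℕ) : Finset ℕ := G.actFinset.filter fun a => h ++ [a] ∈ G.H

/-- The common action set `A(I_i^j)` of an information set. -/
def infoA (i : Fin G.n) (j : ℕ) : Finset ℕ := (G.Info i j).sup fun h => G.A h

/-- A behavioral strategy of player `i`: a probability distribution on `A(I_i^j)` for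
each information set `I_i^j`. -/
def IsBehStrategy (i : Fin G.n) (b : ℕ → ℕ → ℝ) : Prop :=
  ∀ j < G.m i, (∀ a ∈ G.infoA i j, 0 ≤ b j a) ∧ ∑ a ∈ G.infoA i j, b j a = 1

/-- A behavioral strategy profile. -/
def IsBehProfile (β : G.Profile) : Prop := ∀ i : Fin G.n, G.IsBehStrategy i (β i)

/-- The probability of action `a` at history `h`: the chance distribution if the chance
player moves, and the mover's behavioral strategy otherwise. -/
def moveProb (β : G.Profile) (h : List ℕ) (a : ℕ) : ℝ :=
  (G.P h).elim (G.fc h a) fun i => β i (G.infoIdx h) a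

/-- Player `i`'s record `X_i` of the information sets he encounters along a history and the
actions he takes at them, accumulated starting from the prefix `pre`. -/
def recordFrom (i : Fin G.n) : List ℕ → List ℕ → List (ℕ × ℕ)
  | _, [] => []
  | pre, b :: rest =>
    (if G.P pre = some i then [(G.infoIdx pre, b)] else []) ++ recordFrom i (pre ++ [b]) rest

/-- Perfect recall. -/
def PerfectRecall : Prop :=
  ∀ (i : Fin G.n) (j : ℕ), j < G.m i →
    ∀ h ∈ G.Info i j, ∀ h' ∈ G.Info i j, G.recordFrom i [] h = G.recordFrom i [] h'

/-- Product of the move probabilities along `rest`, continuing from the prefix `pre`. -/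
def prodAlong (β : G.Profile) : List ℕ → List ℕ → ℝ
  | _, [] => 1
  | pre, b :: rest => G.moveProb β pre b * prodAlong β (pre ++ [b]) rest

/-- `ω(h|β)`: the probability that the moves along `h` are played under `β`. -/
def omega (β : G.Profile) (h : List ℕ) : ℝ := G.prodAlong β [] h

/-- `ω(I_i^j|β)`. -/
def omegaInfo (i : Fin G.n) (j : ℕ) (β : G.Profile) : ℝ := ∑ h ∈ G.Info i j, G.omega β h

/-- Product of the move probabilities along `rest` from `pre`, disregarding player `i`'s
own moves. -/
def prodAlongNot (i : Fin G.n) (β : G.Profile) : List ℕ → List ℕ → ℝ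
  | _, [] => 1
  | pre, b :: rest =>
    (if G.P pre = some i then 1 else G.moveProb β pre b) * prodAlongNot i β (pre ++ [b]) rest

/-- `S^i(h|β)`: probability of the moves along `h`, disregarding player `i`'s own moves. -/
def Sh (i : Fin G.n) (β : G.Profile) (h : List ℕ) : ℝ := G.prodAlongNot i β [] h

/-- `S^i(I_i^j|β)`. -/
def SInfo (i : Fin G.n) (j : ℕ) (β : G.Profile) : ℝ := ∑ h ∈ G.Info i j, G.Sh i β h

/-- Product of the move probabilities along `rest` from `pre`, with the factor at prefixes
lying in `I_i^j` omitted. -/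
def prodAlongSkip (i : Fin G.n) (j : ℕ) (β : G.Profile) : List ℕ → List ℕ → ℝ
  | _, [] => 1
  | pre, b :: rest =>
    (if pre ∈ G.Info i j then 1 else G.moveProb β pre b) * prodAlongSkip i j β (pre ++ [b]) rest

/-- `q ∈ M(a, I_i^j)`: `I_i^q` is a first information set of player `i` after action `a`
(every history in `I_i^q` contains `a`, with no later action of `a` lying in any action set
of player `i`). -/
def FirstAfter (i : Fin G.n) (a : ℕ) (q : ℕ) : Prop :=
  q < G.m i ∧ ∀ h ∈ G.Info i q, ∃ l₁ l₂ : List ℕ,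
    h = l₁ ++ a :: l₂ ∧ ∀ b ∈ l₂, ∀ p < G.m i, b ∉ G.infoA i p

/-- `q ∈ M(I_i^j) = ∪_{a ∈ A(I_i^j)} M(a, I_i^j)`. -/
def MInfo (i : Fin G.n) (j : ℕ) (q : ℕ) : Prop := ∃ a ∈ G.infoA i j, G.FirstAfter i a q

/-- `q ∈ Λ(a, I_i^j)`: every history in `I_i^q` contains the action `a`. -/
def LambdaSet (i : Fin G.n) (a : ℕ) (q : ℕ) : Prop :=
  q < G.m i ∧ ∀ h ∈ G.Info i q, ∃ l₁ l₂ : List ℕ, h = l₁ ++ a :: l₂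

/-- `ϱ^i_{I_i^j}(β, β̃)`: replace player `i`'s component of `β` by that of `β̃` at every
information set `I_i^q` such that some history in `I_i^q` contains an action of `A(I_i^j)`. -/
def rho (i : Fin G.n) (j : ℕ) (β βt : G.Profile) : G.Profile := fun p q =>
  if p = i ∧ ∃ h ∈ G.Info i q, ∃ b ∈ h, b ∈ G.infoA i j then βt i q else β p q

/-- A belief system: a probability distribution on each information set. -/
def IsBelief (μ : G.Belief) : Prop :=
  ∀ (i : Fin G.n) (j : ℕ), j < G.m i →
    (∀ h ∈ G.Info i j, 0 ≤ μ i j h) ∧ ∑ h ∈ G.Info i j, μ i j h = 1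

/-- A self-independent belief system for `β`:
`S^i(I_i^j|β) · μ^i_{I_i^j}(h) = S^i(h|β)`. -/
def SelfIndep (β : G.Profile) (μ : G.Belief) : Prop :=
  ∀ (i : Fin G.n) (j : ℕ), j < G.m i → ∀ h ∈ G.Info i j,
    G.SInfo i j β * μ i j h = G.Sh i β h

/-- Auxiliary for `ν`: scan `rest` from `pre` for the subhistory lying in `I_i^j`, then
weight by the belief and multiply the move probabilities of the remaining moves (the move
taken at the subhistory itself being skipped). -/
def nuAux (i : Fin G.n) (j : ℕ) (β : G.Profile) (w : List ℕ → ℝ) : List ℕ → List ℕ → ℝ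
  | _, [] => 0
  | pre, b :: rest =>
    if pre ∈ G.Info i j then w pre * G.prodAlong β (pre ++ [b]) rest
    else nuAux i j β w (pre ++ [b]) rest

/-- `ν^i_{I_i^j}(h | a, β^{-I_i^j}, μ)` (it does not involve the component of `β` at
`I_i^j`). -/
def nu (i : Fin G.n) (j : ℕ) (β : G.Profile) (μ : G.Belief) (h : List ℕ) : ℝ :=
  G.nuAux i j β (μ i j) [] h

/-- `u^i((a, β^{-I_i^j}) ∧ I_i^j)`. -/
def uWedgeAct (i : Fin G.n) (j : ℕ) (a : ℕ) (β : G.Profile) : ℝ :=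
  ∑ h ∈ G.Zset.filter (fun h => a ∈ h), G.u i h * G.prodAlongSkip i j β [] h

/-- `u^i(β ∧ I_i^j)`. -/
def uWedge (i : Fin G.n) (j : ℕ) (β : G.Profile) : ℝ :=
  ∑ h ∈ G.Zset.filter (fun h => ∃ b ∈ h, b ∈ G.infoA i j), G.u i h * G.omega β h

/-- The conditional expected payoff `u^i(a, β^{-I_i^j}, μ | I_i^j)`. -/
def uCond (i : Fin G.n) (j : ℕ) (a : ℕ) (β : G.Profile) (μ : G.Belief) : ℝ :=
  ∑ h ∈ G.Zset.filter (fun h => a ∈ h), G.u i h * G.nu i j β μ h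

/-- The expected payoff `u^i(β)`. -/
def uExp (i : Fin G.n) (β : G.Profile) : ℝ := ∑ h ∈ G.Zset, G.u i h * G.omega β h

/-- The profile obtained from `β` by replacing all of player `i`'s components by `b`. -/
def replace (β : G.Profile) (i : Fin G.n) (b : ℕ → ℕ → ℝ) : G.Profile :=
  fun p => if p = i then b else β p

/-- `β` is a Nash equilibrium in behavioral strategies. -/
def IsNash (β : G.Profile) : Prop :=
  G.IsBehProfile β ∧ ∀ (i : Fin G.n) (b : ℕ → ℕ → ℝ), G.IsBehStrategy i b →
    G.uExp i (G.replace β i b) ≤ G.uExp i β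

/-- `(β, β̃, μ)` satisfies the Nash characterization (Definition 2 of the paper). -/
def NashChar (β βt : G.Profile) (μ : G.Belief) : Prop :=
  (∀ (i : Fin G.n) (j : ℕ), j < G.m i → ∀ a' ∈ G.infoA i j, ∀ a'' ∈ G.infoA i j,
    G.uWedgeAct i j a' (G.rho i j β βt) < G.uWedgeAct i j a'' (G.rho i j β βt) →
    β i j a' = 0) ∧
  (∀ (i : Fin G.n) (j : ℕ), j < G.m i → ∀ a' ∈ G.infoA i j, ∀ a'' ∈ G.infoA i j,
    G.uCond i j a' (G.rho i j β βt) μ < G.uCond i j a'' (G.rho i j β βt) μ →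
    βt i j a' = 0) ∧
  G.IsBelief μ ∧ G.SelfIndep β μ

/-- `r` is the root of a subgame: every information set lies entirely inside or entirely
outside the set of histories extending `r`. -/
def IsSubgameRoot (r : List ℕ) : Prop :=
  r ∈ G.H ∧ ∀ (i : Fin G.n) (j : ℕ), j < G.m i →
    (∀ h ∈ G.Info i j, r <+: h) ∨ ∀ h ∈ G.Info i j, ¬ r <+: h

/-- The depth `g` of the smallest subgame containing `A(I_i^j)` (the length of the longest
subgame root preceding every history of `I_i^j`). -/
def sgDepthInfo (i : Fin G.n) (j : ℕ) : ℕ :=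
  (G.H.filter fun r => G.IsSubgameRoot r ∧ ∀ h ∈ G.Info i j, r <+: h).sup List.length

/-- The depth `q(h)` of the smallest subgame containing the last action of `h`. -/
def sgDepthHist (h : List ℕ) : ℕ :=
  (G.H.filter fun r => G.IsSubgameRoot r ∧ r <+: h.dropLast).sup List.length

/-- `C^i_{I_i^j}(h|β)`: product of move probabilities along `h` within the smallest subgame
containing `A(I_i^j)`. -/
def Ch (i : Fin G.n) (j : ℕ) (β : G.Profile) (h : List ℕ) : ℝ :=
  G.prodAlong β (h.take (G.sgDepthInfo i j)) (h.drop (G.sgDepthInfo i j))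

/-- `C^i_{I_i^j}(I_i^j|β)`. -/
def CInfo (i : Fin G.n) (j : ℕ) (β : G.Profile) : ℝ := ∑ h ∈ G.Info i j, G.Ch i j β h

/-- `u^i((a, β^{-I_i^j}) ⋄ I_i^j)`. -/
def uDiamondAct (i : Fin G.n) (j : ℕ) (a : ℕ) (β : G.Profile) : ℝ :=
  ∑ h ∈ G.Zset.filter (fun h => a ∈ h), G.u i h *
    G.prodAlongSkip i j β (h.take (G.sgDepthInfo i j)) (h.drop (G.sgDepthInfo i j))

/-- `Y^i(h|β)`: like `S^i(h|β)` but within the smallest subgame containing the last action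
of `h`. -/
def Yh (i : Fin G.n) (β : G.Profile) (h : List ℕ) : ℝ :=
  G.prodAlongNot i β (h.take (G.sgDepthHist h)) (h.drop (G.sgDepthHist h))

/-- `Y^i(I_i^j|β)`. -/
def YInfo (i : Fin G.n) (j : ℕ) (β : G.Profile) : ℝ := ∑ h ∈ G.Info i j, G.Yh i β h

/-- The belief condition `Y^i(I_i^j|β) · μ^i_{I_i^j}(h) = Y^i(h|β)`. -/
def YConsistent (β : G.Profile) (μ : G.Belief) : Prop :=
  ∀ (i : Fin G.n) (j : ℕ), j < G.m i → ∀ h ∈ G.Info i j,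
    G.YInfo i j β * μ i j h = G.Yh i β h

/-- The expected payoff of player `i` in the subgame rooted at `r` (payoffs of terminal
histories extending `r`, weighted by the move probabilities within the subgame). -/
def uExpFrom (i : Fin G.n) (β : G.Profile) (r : List ℕ) : ℝ :=
  ∑ h ∈ G.Zset.filter (fun h => r <+: h), G.u i h * G.prodAlong β r (h.drop r.length)

/-- `β` is a subgame perfect equilibrium in behavioral strategies: its restriction to every
subgame is a Nash equilibrium in behavioral strategies of that subgame. -/
def IsSubgamePerfect (β : G.Profile) : Prop :=
  G.IsBehProfile β ∧ ∀ r : List ℕ, G.IsSubgameRoot r →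
    ∀ (i : Fin G.n) (b : ℕ → ℕ → ℝ), G.IsBehStrategy i b →
      G.uExpFrom i (G.replace β i b) r ≤ G.uExpFrom i β r

/-- `(β, β̃, μ)` satisfies the subgame perfect characterization (Definition 6 of the
paper). -/
def SubgameChar (β βt : G.Profile) (μ : G.Belief) : Prop :=
  (∀ (i : Fin G.n) (j : ℕ), j < G.m i → ∀ a' ∈ G.infoA i j, ∀ a'' ∈ G.infoA i j,
    G.uDiamondAct i j a' (G.rho i j β βt) < G.uDiamondAct i j a'' (G.rho i j β βt) →
    β i j a' = 0) ∧
  (∀ (i : Fin G.n) (j : ℕ), j < G.m i → ∀ a' ∈ G.infoA i j, ∀ a'' ∈ G.infoA i j,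
    G.uCond i j a' (G.rho i j β βt) μ < G.uCond i j a'' (G.rho i j β βt) μ →
    βt i j a' = 0) ∧
  G.IsBelief μ ∧ G.YConsistent β μ

/-- `(β, μ)` is a semi-sequential equilibrium. -/
def SemiSeqEq (β : G.Profile) (μ : G.Belief) : Prop :=
  G.IsBehProfile β ∧ G.IsBelief μ ∧ G.SelfIndep β μ ∧
  ∀ (i : Fin G.n) (j : ℕ), j < G.m i → ∀ a' ∈ G.infoA i j, ∀ a'' ∈ G.infoA i j,
    G.uCond i j a' β μ < G.uCond i j a'' β μ → β i j a' = 0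

/-- `(β, μ)` is a subgame perfect semi-sequential equilibrium. -/
def SubgameSemiSeqEq (β : G.Profile) (μ : G.Belief) : Prop :=
  G.IsBehProfile β ∧ G.IsBelief μ ∧ G.YConsistent β μ ∧
  ∀ (i : Fin G.n) (j : ℕ), j < G.m i → ∀ a' ∈ G.infoA i j, ∀ a'' ∈ G.infoA i j,
    G.uCond i j a' β μ < G.uCond i j a'' β μ → β i j a' = 0

/-- `d(I_i^j)`: the number of information sets of player `i` containing a prefix of some
history of `I_i^j` (counting `I_i^j` itself). -/
def dInfo (i : Fin G.n) (j : ℕ) : ℕ :=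
  ((Finset.range (G.m i)).filter
    (fun q => ∃ h ∈ G.Info i j, ∃ p : List ℕ, p <+: h ∧ p ∈ G.Info i q)).card

end EFG

/-!
The main tool is an exact formula for the gain from a deviation.  Let `γ` follow `β`, except that
player `i` plays `β̃`.  If player `i` deviates from `β` to `b`, the payoff changes relative to `γ`
by the sum, over all histories, of the probability of reaching the history under the deviation
times the gain from moving once by `b` and then following `γ`.  Only the information sets of
player `i` contribute.  By perfect recall player `i`'s own moves contribute the same factor to
every history of `I_i^j`, so a self-independent belief turns the reach probabilities into
`ω(I_i^j|b) μ(h)`, and the sum becomes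
`∑_j ω(I_i^j|b) (⟨b_j, v_j⟩ - ⟨β̃_j, v_j⟩)` with `v_j(a) = u^i(a, ϱ(β, β̃), μ | I_i^j)`.

If each `β̃_j` maximizes `v_j`, no `b` earns more than `β̃`; hence `β` is an equilibrium exactly when
every term of the sum for `b = β` vanishes, that is, when `β_j` maximizes `ω(I_i^j|β) v_j`.  Such a
`β̃` exists by backward induction over the information sets, and the multipliers of the system are
the KKT multipliers of these linear problems.
-/

/-- `x` is a probability distribution on the finite set `A`; values outside `A` are ignored, which
is the convention for strategies and beliefs in `EFG`. -/
def IsProbOn {α : Type*} (A : Finset α) (x : α → ℝ) : Prop :=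
  (∀ a ∈ A, 0 ≤ x a) ∧ ∑ a ∈ A, x a = 1

/-- The mixture `x` of the alternatives in `A` is a best reply to the payoffs `v`: no alternative
earns more than `x` does on average. -/
def IsBestReply {α : Type*} (A : Finset α) (v x : α → ℝ) : Prop :=
  ∀ a ∈ A, v a ≤ ∑ b ∈ A, x b * v b

section FiniteMixtures

variable {α : Type*} {A : Finset α} {v w x y : α → ℝ}

theorem isProbOn_single [DecidableEq α] {a : α} (ha : a ∈ A) :
    IsProbOn A (Pi.single a 1) := by
  refine ⟨fun b _ => ?_, by rw [Finset.sum_pi_single', if_pos ha]⟩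
  rw [Pi.single_apply]
  positivity

theorem exists_isProbOn_isBestReply (hA : A.Nonempty) (v : α → ℝ) :
    ∃ x, IsProbOn A x ∧ IsBestReply A v x := by
  obtain ⟨a₀, ha₀, hmax⟩ := A.exists_max_image v hA
  refine ⟨Pi.single a₀ 1, isProbOn_single ha₀, fun a ha => (hmax a ha).trans_eq ?_⟩
  rw [Finset.sum_eq_single_of_mem a₀ ha₀ fun b _ hb => by simp [hb], Pi.single_eq_same, one_mul]

theorem IsBestReply.sum_mul_le (hx : IsBestReply A v x) (hy : IsProbOn A y) :
    ∑ a ∈ A, y a * v a ≤ ∑ a ∈ A, x a * v a :=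
  calc ∑ a ∈ A, y a * v a
      ≤ ∑ a ∈ A, y a * ∑ b ∈ A, x b * v b :=
        Finset.sum_le_sum fun a ha => mul_le_mul_of_nonneg_left (hx a ha) (hy.1 a ha)
    _ = ∑ b ∈ A, x b * v b := by rw [← Finset.sum_mul, hy.2, one_mul]

theorem IsBestReply.isBestReply_smul_iff (hy : IsBestReply A v y) (hyA : IsProbOn A y)
    (hx : IsProbOn A x) {c : ℝ} (hc : 0 ≤ c) :
    IsBestReply A (fun a => c * v a) x ↔
      c * (∑ a ∈ A, x a * v a - ∑ a ∈ A, y a * v a) = 0 := by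
  have hscale : ∀ w : α → ℝ, ∑ a ∈ A, w a * (c * v a) = c * ∑ a ∈ A, w a * v a := fun w => by
    simp only [Finset.mul_sum, mul_left_comm]
  rw [mul_sub, sub_eq_zero]
  constructor
  · intro hbest
    refine le_antisymm (mul_le_mul_of_nonneg_left (hy.sum_mul_le hx) hc) ?_
    simpa only [hscale] using hbest.sum_mul_le hyA
  · intro heq a ha
    rw [hscale, heq]
    exact mul_le_mul_of_nonneg_left (hy a ha) hc

theorem isBestReply_iff_exists_multiplier (hx : IsProbOn A x) :
    IsBestReply A v x ↔
      ∃ (l : α → ℝ) (z : ℝ), (∀ a ∈ A, v a + l a - z = 0) ∧ ∀ a ∈ A, x a * l a = 0 ∧ 0 ≤ l a := by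
  constructor
  · intro hbest
    set z := ∑ b ∈ A, x b * v b with hz
    have hl : ∀ a ∈ A, 0 ≤ z - v a := fun a ha => sub_nonneg.2 (hbest a ha)
    have hsum : ∑ a ∈ A, x a * (z - v a) = 0 := by
      simp only [mul_sub, Finset.sum_sub_distrib, ← Finset.sum_mul, hx.2, ← hz, one_mul, sub_self]
    have hslack := (Finset.sum_eq_zero_iff_of_nonneg
      fun a ha => mul_nonneg (hx.1 a ha) (hl a ha)).1 hsum
    exact ⟨fun a => z - v a, z, fun a _ => by ring, fun a ha => ⟨hslack a ha, hl a ha⟩⟩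
  · rintro ⟨l, z, hstat, hslack⟩ a ha
    have hz : ∑ b ∈ A, x b * v b = z :=
      calc ∑ b ∈ A, x b * v b
          = ∑ b ∈ A, x b * z := Finset.sum_congr rfl fun b hb => by
            linear_combination x b * hstat b hb - (hslack b hb).1
        _ = z := by rw [← Finset.sum_mul, hx.2, one_mul]
    linarith [hstat a ha, (hslack a ha).2]

theorem exists_isProbOn_sum_mul_eq (hA : A.Nonempty) (hw : ∀ a ∈ A, 0 ≤ w a) :
    ∃ p, IsProbOn A p ∧ ∀ a ∈ A, (∑ b ∈ A, w b) * p a = w a := by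
  by_cases h0 : ∑ b ∈ A, w b = 0
  · obtain ⟨a₀, ha₀⟩ := hA
    have hzero := (Finset.sum_eq_zero_iff_of_nonneg hw).1 h0
    exact ⟨Pi.single a₀ 1, isProbOn_single ha₀, fun a ha => by rw [h0, zero_mul, hzero a ha]⟩
  · refine ⟨fun a => w a / ∑ b ∈ A, w b, ⟨fun a ha => ?_, ?_⟩, fun a _ => mul_div_cancel₀ _ h0⟩
    · exact div_nonneg (hw a ha) (Finset.sum_nonneg hw)
    · rw [← Finset.sum_div, div_self h0]

end FiniteMixtures

theorem exists_forall_of_wellFounded {ι α : Type*} [Nonempty α] {r : ι → ι → Prop}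
    (hr : WellFounded r) {Q : ι → (ι → α) → α → Prop} (hex : ∀ i f, ∃ x, Q i f x)
    (hloc : ∀ i f g, (∀ k, r k i → f k = g k) → ∀ x, Q i f x → Q i g x) :
    ∃ f : ι → α, ∀ i, Q i f (f i) := by
  choose sel hsel using hex
  let extend (i : ι) (F : ∀ k, r k i → α) (k : ι) : α :=
    if h : r k i then F k h else Classical.arbitrary α
  let f : ι → α := hr.fix fun i F => sel i (extend i F)
  have hf : ∀ i, f i = sel i (extend i fun k _ => f k) := hr.fix_eq _
  refine ⟨f, fun i => hloc i (extend i fun k _ => f k) f (fun k hk => dif_pos hk) _ ?_⟩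
  rw [hf i]
  exact hsel i _

namespace EFG

variable {G : EFG} {i : Fin G.n} {j a : ℕ} {h h' z : List ℕ} {β βt γ : G.Profile} {μ : G.Belief}

/-! ### The game tree -/

theorem mem_H_of_isPrefix (hz : z ∈ G.H) (h_pre : h <+: z) : h ∈ G.H :=
  G.prefixClosed z hz h h_pre

theorem mem_H_of_mem_Zset (hz : z ∈ G.Zset) : z ∈ G.H :=
  (Finset.mem_filter.1 hz).1

theorem mem_A : a ∈ G.A h ↔ h ++ [a] ∈ G.H :=
  Finset.mem_filter.trans ⟨And.right, fun hH => ⟨G.act_mem h a hH, hH⟩⟩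

theorem mem_infoA : a ∈ G.infoA i j ↔ ∃ h ∈ G.Info i j, h ++ [a] ∈ G.H := by
  simp only [infoA, Finset.mem_sup, mem_A]

theorem infoA_eq_A (hj : j < G.m i) (hh : h ∈ G.Info i j) : G.infoA i j = G.A h := by
  ext a
  rw [mem_infoA, mem_A]
  exact ⟨fun ⟨h', hh', ha⟩ => (G.info_actions i j hj h' hh' h hh a).1 ha, fun ha => ⟨h, hh, ha⟩⟩

theorem infoA_nonempty (hj : j < G.m i) : (G.infoA i j).Nonempty := by
  obtain ⟨h, hh⟩ := G.info_nonempty i j hj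
  obtain ⟨a, ha⟩ := ((G.info_spec i j h hj).1 hh).2.2.1
  exact ⟨a, mem_infoA.2 ⟨h, hh, ha⟩⟩

theorem mem_Info_infoIdx (hP : G.P h = some i) (hH : h ++ [a] ∈ G.H) :
    G.infoIdx h < G.m i ∧ h ∈ G.Info i (G.infoIdx h) := by
  have hh := mem_H_of_isPrefix hH (List.prefix_append h [a])
  have hlt := G.infoIdx_lt i h hh hP ⟨a, hH⟩
  exact ⟨hlt, (G.info_spec i _ h hlt).2 ⟨hh, hP, ⟨a, hH⟩, rfl⟩⟩

theorem mem_Info_of_mem_infoA (hj : j < G.m i) (ha : a ∈ G.infoA i j) (hH : h ++ [a] ∈ G.H) :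
    h ∈ G.Info i j := by
  obtain ⟨h', hh', ha'⟩ := mem_infoA.1 ha
  obtain ⟨hH', hP', -, rfl⟩ := (G.info_spec i j h' hj).1 hh'
  obtain ⟨hP, hidx⟩ :=
    G.act_unique h' h a hH' (mem_H_of_isPrefix hH (List.prefix_append h [a])) ha' hH
  rw [hidx]
  exact (mem_Info_infoIdx (hP ▸ hP') hH).2

theorem exists_mem_Info_of_mem (hj : j < G.m i) (ha : a ∈ G.infoA i j) (hz : z ∈ G.H)
    (haz : a ∈ z) : ∃ h ∈ G.Info i j, h ++ [a] <+: z := by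
  obtain ⟨h, t, rfl⟩ := List.append_of_mem haz
  have h_pre : h ++ [a] <+: h ++ a :: t := ⟨t, by simp⟩
  exact ⟨h, mem_Info_of_mem_infoA hj ha (mem_H_of_isPrefix hz h_pre), h_pre⟩

theorem sum_H_eq (f : List ℕ → ℝ) :
    ∑ h ∈ G.H, f h = f [] + ∑ h ∈ G.H, ∑ a ∈ G.A h, f (h ++ [a]) := by
  rw [← Finset.add_sum_erase G.H f G.empty_mem, Finset.sum_sigma']
  congr 1
  symm
  refine Finset.sum_bij (fun p _ => p.1 ++ [p.2]) ?_ ?_ ?_ fun _ _ => rfl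
  · rintro ⟨h, a⟩ hp
    simpa using mem_A.1 (Finset.mem_sigma.1 hp).2
  · rintro ⟨h, a⟩ - ⟨h', a'⟩ - heq
    simpa using heq
  · intro h hh
    obtain ⟨hne, hH⟩ := Finset.mem_erase.1 hh
    obtain ⟨t, a, rfl⟩ := (List.eq_nil_or_concat' h).resolve_left hne
    exact ⟨⟨t, a⟩, Finset.mem_sigma.2
      ⟨mem_H_of_isPrefix hH (List.prefix_append t [a]), mem_A.2 hH⟩, rfl⟩

theorem sum_H_eq_sum_Info (i : Fin G.n) (f : List ℕ → ℝ)
    (hf : ∀ h ∈ G.H, ¬(G.P h = some i ∧ ∃ a, h ++ [a] ∈ G.H) → f h = 0) :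
    ∑ h ∈ G.H, f h = ∑ j ∈ Finset.range (G.m i), ∑ h ∈ G.Info i j, f h := by
  set own := G.H.filter fun h => G.P h = some i ∧ ∃ a, h ++ [a] ∈ G.H with h_own
  have hmaps : ∀ h ∈ own, G.infoIdx h ∈ Finset.range (G.m i) := by
    intro h hh
    obtain ⟨-, hP, a, ha⟩ := Finset.mem_filter.1 hh
    exact Finset.mem_range.2 (mem_Info_infoIdx hP ha).1
  have hfiber : ∀ j ∈ Finset.range (G.m i), own.filter (G.infoIdx · = j) = G.Info i j := by
    intro j hj
    ext h
    rw [G.info_spec i j h (Finset.mem_range.1 hj), Finset.mem_filter, h_own, Finset.mem_filter]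
    tauto
  calc ∑ h ∈ G.H, f h
      = ∑ h ∈ own, f h :=
        (Finset.sum_filter_of_ne fun h hh hne => not_not.1 (mt (hf h hh) hne)).symm
    _ = ∑ j ∈ Finset.range (G.m i), ∑ h ∈ own.filter (G.infoIdx · = j), f h :=
        (Finset.sum_fiberwise_of_maps_to hmaps f).symm
    _ = ∑ j ∈ Finset.range (G.m i), ∑ h ∈ G.Info i j, f h :=
        Finset.sum_congr rfl fun j hj => by rw [hfiber j hj]

/-! ### Continuation payoffs and the performance difference -/

theorem prodAlong_append (β : G.Profile) (pre s t : List ℕ) :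
    G.prodAlong β pre (s ++ t) = G.prodAlong β pre s * G.prodAlong β (pre ++ s) t := by
  induction s generalizing pre with
  | nil => simp [prodAlong]
  | cons c s ih => simp [prodAlong, ih, mul_assoc]

theorem omega_append_singleton (β : G.Profile) (h : List ℕ) (a : ℕ) :
    G.omega β (h ++ [a]) = G.omega β h * G.moveProb β h a := by
  simp [omega, prodAlong_append, prodAlong]

theorem uExpFrom_nil (i : Fin G.n) (β : G.Profile) : G.uExpFrom i β [] = G.uExp i β := by
  simp [uExpFrom, uExp, omega]

theorem uExpFrom_of_mem_Zset (i : Fin G.n) (β : G.Profile) (hz : z ∈ G.Zset) :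
    G.uExpFrom i β z = G.u i z := by
  have hfilter : G.Zset.filter (z <+: ·) = {z} := by
    ext z'
    rw [Finset.mem_filter, Finset.mem_singleton]
    refine ⟨fun ⟨hz', t, ht⟩ => ?_, by rintro rfl; exact ⟨hz, List.prefix_rfl⟩⟩
    cases t with
    | nil => simpa using ht.symm
    | cons a t =>
      exact absurd (mem_H_of_isPrefix (mem_H_of_mem_Zset hz') ⟨t, by simpa using ht⟩)
        ((Finset.mem_filter.1 hz).2 a)
  rw [uExpFrom, hfilter]
  simp [prodAlong]

theorem uExpFrom_eq_sum (i : Fin G.n) (β : G.Profile) (hh : h ∉ G.Zset) :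
    G.uExpFrom i β h = ∑ a ∈ G.A h, G.moveProb β h a * G.uExpFrom i β (h ++ [a]) := by
  have hcover : G.Zset.filter (h <+: ·) =
      (G.A h).biUnion fun a => G.Zset.filter (h ++ [a] <+: ·) := by
    ext z
    simp only [Finset.mem_biUnion, Finset.mem_filter, mem_A]
    constructor
    · rintro ⟨hz, t, rfl⟩
      cases t with
      | nil => exact absurd (by simpa using hz) hh
      | cons a t =>
        have h_pre : h ++ [a] <+: h ++ a :: t := ⟨t, by simp⟩
        exact ⟨a, mem_H_of_isPrefix (mem_H_of_mem_Zset hz) h_pre, hz, h_pre⟩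
    · rintro ⟨a, -, hz, h_pre⟩
      exact ⟨hz, (List.prefix_append h [a]).trans h_pre⟩
  have hdisj : (G.A h : Set ℕ).PairwiseDisjoint fun a => G.Zset.filter (h ++ [a] <+: ·) := by
    refine fun a _ b _ hab => Finset.disjoint_left.2 fun z hza hzb => hab ?_
    have heq : h ++ [a] = h ++ [b] :=
      (List.prefix_of_prefix_length_le (Finset.mem_filter.1 hza).2 (Finset.mem_filter.1 hzb).2
        (by simp)).eq_of_length (by simp)
    simpa using heq
  rw [uExpFrom, hcover, Finset.sum_biUnion hdisj]
  refine Finset.sum_congr rfl fun a _ => ?_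
  rw [uExpFrom, Finset.mul_sum]
  refine Finset.sum_congr rfl fun z hz => ?_
  obtain ⟨t, rfl⟩ := (Finset.mem_filter.1 hz).2
  have hdrop : (h ++ [a] ++ t).drop h.length = a :: t := by simp
  rw [List.drop_left, hdrop, prodAlong]
  ring

theorem uExpFrom_eq_ite_add_sum (i : Fin G.n) (β : G.Profile) (h : List ℕ) :
    G.uExpFrom i β h = (if h ∈ G.Zset then G.u i h else 0) +
      ∑ a ∈ G.A h, G.moveProb β h a * G.uExpFrom i β (h ++ [a]) := by
  split_ifs with hh
  · have hA : G.A h = ∅ :=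
      Finset.eq_empty_of_forall_notMem fun a ha => (Finset.mem_filter.1 hh).2 a (mem_A.1 ha)
    rw [uExpFrom_of_mem_Zset i β hh, hA, Finset.sum_empty, add_zero]
  · rw [uExpFrom_eq_sum i β hh, zero_add]

-- Evaluate the total of `ω(h|β) V(h)` over all histories, with `V` the continuation payoff under
-- `γ`, in two ways: by splitting `ω(h|β)` at the last move of `h`, and `V(h)` at the next move.
theorem uExp_sub_uExp (i : Fin G.n) (β γ : G.Profile) :
    G.uExp i β - G.uExp i γ = ∑ h ∈ G.H, G.omega β h *
      ∑ a ∈ G.A h, (G.moveProb β h a - G.moveProb γ h a) * G.uExpFrom i γ (h ++ [a]) := by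
  have hlast : ∑ h ∈ G.H, G.omega β h * G.uExpFrom i γ h = G.uExp i γ +
      ∑ h ∈ G.H, G.omega β h * ∑ a ∈ G.A h, G.moveProb β h a * G.uExpFrom i γ (h ++ [a]) := by
    rw [sum_H_eq, uExpFrom_nil]
    simp only [omega_append_singleton, Finset.mul_sum, mul_assoc]
    simp [omega, prodAlong]
  have hnext : ∑ h ∈ G.H, G.omega β h * G.uExpFrom i γ h = G.uExp i β +
      ∑ h ∈ G.H, G.omega β h * ∑ a ∈ G.A h, G.moveProb γ h a * G.uExpFrom i γ (h ++ [a]) := by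
    have hpay : G.uExp i β = ∑ h ∈ G.H, G.omega β h * if h ∈ G.Zset then G.u i h else 0 := by
      simp only [uExp, Zset, Finset.sum_filter, Finset.mem_filter, mul_ite, mul_zero]
      exact Finset.sum_congr rfl fun h hh => by simp [hh, mul_comm]
    rw [hpay, ← Finset.sum_add_distrib]
    exact Finset.sum_congr rfl fun h _ => by rw [uExpFrom_eq_ite_add_sum i γ h, mul_add]
  simp only [sub_mul, Finset.sum_sub_distrib, mul_sub]
  linarith

/-! ### Records and reach probabilities -/

/-- The product of the probabilities a strategy `b` gives to the actions in a record `X_i(h)`, i.e.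
the realization weight of the sequence form: player `i`'s own contribution to reaching `h`. -/
def realizationWeight (b : ℕ → ℕ → ℝ) (r : List (ℕ × ℕ)) : ℝ :=
  (r.map fun p => b p.1 p.2).prod

theorem moveProb_replace_of_eq (β : G.Profile) (b : ℕ → ℕ → ℝ) (hP : G.P h = some i) (a : ℕ) :
    G.moveProb (G.replace β i b) h a = b (G.infoIdx h) a := by
  simp [moveProb, replace, hP]

theorem moveProb_replace_of_ne (β : G.Profile) (b : ℕ → ℕ → ℝ) (hP : G.P h ≠ some i) (a : ℕ) :
    G.moveProb (G.replace β i b) h a = G.moveProb β h a := by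
  cases hq : G.P h with
  | none => simp [moveProb, hq]
  | some k =>
    have hki : k ≠ i := fun hki => hP (hki ▸ hq)
    simp [moveProb, replace, hq, hki]

theorem replace_self (β : G.Profile) (i : Fin G.n) : G.replace β i (β i) = β := by
  funext p
  unfold replace
  split_ifs with hp
  · rw [hp]
  · rfl

theorem prodAlong_replace (β : G.Profile) (i : Fin G.n) (b : ℕ → ℕ → ℝ) (pre rest : List ℕ) :
    G.prodAlong (G.replace β i b) pre rest =
      realizationWeight b (G.recordFrom i pre rest) * G.prodAlongNot i β pre rest := by
  induction rest generalizing pre with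
  | nil => simp [prodAlong, prodAlongNot, recordFrom, realizationWeight]
  | cons a rest ih =>
    rw [prodAlong, prodAlongNot, recordFrom, ih]
    by_cases hP : G.P pre = some i
    · simp only [hP, if_true, moveProb_replace_of_eq β b hP, realizationWeight,
        List.singleton_append, List.map_cons, List.prod_cons]
      ring
    · simp only [hP, if_false, moveProb_replace_of_ne β b hP, List.nil_append]
      ring

theorem omega_replace (β : G.Profile) (i : Fin G.n) (b : ℕ → ℕ → ℝ) (h : List ℕ) :
    G.omega (G.replace β i b) h = realizationWeight b (G.recordFrom i [] h) * G.Sh i β h :=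
  prodAlong_replace β i b [] h

theorem recordFrom_append (i : Fin G.n) (pre s t : List ℕ) :
    G.recordFrom i pre (s ++ t) = G.recordFrom i pre s ++ G.recordFrom i (pre ++ s) t := by
  induction s generalizing pre with
  | nil => simp [recordFrom]
  | cons a s ih => simp [recordFrom, ih]

theorem length_recordFrom_le (i : Fin G.n) (pre rest : List ℕ) :
    (G.recordFrom i pre rest).length ≤ rest.length := by
  induction rest generalizing pre with
  | nil => rfl
  | cons a rest ih =>
    rw [recordFrom, List.length_append, List.length_cons, add_comm]
    exact Nat.add_le_add (ih _) (by split_ifs <;> simp)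

theorem length_recordFrom_lt (hP : G.P h = some i) (h_pre : h ++ [a] <+: z) :
    (G.recordFrom i [] h).length < (G.recordFrom i [] z).length := by
  obtain ⟨t, rfl⟩ := h_pre
  simp only [recordFrom_append, List.nil_append, recordFrom, hP, if_true, List.length_append,
    List.length_cons]
  omega

theorem omegaInfo_replace_mul (hPR : G.PerfectRecall) (hμ : G.SelfIndep β μ) (b : ℕ → ℕ → ℝ)
    (hj : j < G.m i) (hh : h ∈ G.Info i j) :
    G.omegaInfo i j (G.replace β i b) * μ i j h = G.omega (G.replace β i b) h := by
  have hsum : G.omegaInfo i j (G.replace β i b) =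
      realizationWeight b (G.recordFrom i [] h) * G.SInfo i j β := by
    rw [omegaInfo, SInfo, Finset.mul_sum]
    exact Finset.sum_congr rfl fun h' hh' => by
      rw [omega_replace, hPR i j hj h' hh' h hh]
  rw [hsum, mul_assoc, hμ i j hj h hh, omega_replace]

theorem IsBehProfile.replace (hβ : G.IsBehProfile β) {b : ℕ → ℕ → ℝ}
    (hb : G.IsBehStrategy i b) : G.IsBehProfile (G.replace β i b) := by
  intro p
  unfold EFG.replace
  split_ifs with hp
  · exact hp ▸ hb
  · exact hβ p

theorem IsBehProfile.moveProb_nonneg (hβ : G.IsBehProfile β) (hH : h ++ [a] ∈ G.H) :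
    0 ≤ G.moveProb β h a := by
  unfold moveProb
  cases hP : G.P h with
  | none => exact G.fc_nonneg h a
  | some i =>
    obtain ⟨hlt, hmem⟩ := mem_Info_infoIdx hP hH
    exact (hβ i _ hlt).1 a (mem_infoA.2 ⟨h, hmem, hH⟩)

theorem IsBehProfile.prodAlong_nonneg (hβ : G.IsBehProfile β) {pre rest : List ℕ}
    (hH : pre ++ rest ∈ G.H) : 0 ≤ G.prodAlong β pre rest := by
  induction rest generalizing pre with
  | nil => exact zero_le_one
  | cons a rest ih =>
    rw [List.append_cons] at hH
    exact mul_nonneg (hβ.moveProb_nonneg (mem_H_of_isPrefix hH (List.prefix_append _ _))) (ih hH)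

theorem IsBehProfile.prodAlongNot_nonneg (hβ : G.IsBehProfile β) (i : Fin G.n)
    {pre rest : List ℕ} (hH : pre ++ rest ∈ G.H) : 0 ≤ G.prodAlongNot i β pre rest := by
  induction rest generalizing pre with
  | nil => exact zero_le_one
  | cons a rest ih =>
    rw [List.append_cons] at hH
    refine mul_nonneg ?_ (ih hH)
    split_ifs
    · exact zero_le_one
    · exact hβ.moveProb_nonneg (mem_H_of_isPrefix hH (List.prefix_append _ _))

theorem IsBehProfile.omegaInfo_nonneg (hβ : G.IsBehProfile β) (hj : j < G.m i) :
    0 ≤ G.omegaInfo i j β :=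
  Finset.sum_nonneg fun h hh => hβ.prodAlong_nonneg ((G.info_spec i j h hj).1 hh).1

theorem IsBehProfile.exists_belief (hβ : G.IsBehProfile β) :
    ∃ μ : G.Belief, G.IsBelief μ ∧ G.SelfIndep β μ := by
  have hex : ∀ (i : Fin G.n) (j : ℕ), j < G.m i → ∃ p : List ℕ → ℝ, IsProbOn (G.Info i j) p ∧
      ∀ h ∈ G.Info i j, G.SInfo i j β * p h = G.Sh i β h := fun i j hj =>
    exists_isProbOn_sum_mul_eq (G.info_nonempty i j hj) fun h hh =>
      hβ.prodAlongNot_nonneg i ((G.info_spec i j h hj).1 hh).1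
  choose! μ hμ using hex
  exact ⟨μ, fun i j hj => (hμ i j hj).1, fun i j hj => (hμ i j hj).2⟩

/-! ### Conditional expected payoffs -/

theorem PerfectRecall.eq_of_isPrefix (hPR : G.PerfectRecall) (hj : j < G.m i)
    (hh : h ∈ G.Info i j) (hh' : h' ∈ G.Info i j) (h_pre : h <+: h') : h = h' := by
  obtain ⟨t, rfl⟩ := h_pre
  cases t with
  | nil => simp
  | cons a t =>
    have hlt : (G.recordFrom i [] h).length < (G.recordFrom i [] (h ++ a :: t)).length :=
      length_recordFrom_lt ((G.info_spec i j h hj).1 hh).2.1 (a := a) ⟨t, by simp⟩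
    rw [hPR i j hj h hh _ hh'] at hlt
    exact absurd hlt (lt_irrefl _)

theorem nuAux_append (γ : G.Profile) (w : List ℕ → ℝ) {pre s : List ℕ}
    (hin : pre ++ s ∈ G.Info i j) (hfirst : ∀ s', s' <+: s → s' ≠ s → pre ++ s' ∉ G.Info i j)
    (a : ℕ) (t : List ℕ) :
    G.nuAux i j γ w pre (s ++ a :: t) = w (pre ++ s) * G.prodAlong γ (pre ++ s ++ [a]) t := by
  induction s generalizing pre with
  | nil =>
    rw [List.append_nil] at hin
    simp [nuAux, hin]
  | cons c s ih =>
    have hpre : pre ∉ G.Info i j := by simpa using hfirst [] List.nil_prefix (by simp)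
    rw [List.append_cons] at hin
    rw [List.cons_append, nuAux, if_neg hpre, ih hin fun s' h_pre hne => ?_, ← List.append_cons]
    simpa using hfirst (c :: s') (List.cons_prefix_cons.2 ⟨rfl, h_pre⟩) (by simpa using hne)

theorem nu_append (hPR : G.PerfectRecall) (γ : G.Profile) (μ : G.Belief) (hj : j < G.m i)
    (hh : h ∈ G.Info i j) (a : ℕ) (t : List ℕ) :
    G.nu i j γ μ (h ++ a :: t) = μ i j h * G.prodAlong γ (h ++ [a]) t :=
  nuAux_append γ (μ i j) (pre := []) hh
    (fun _ h_pre hne hin => hne (hPR.eq_of_isPrefix hj hin hh h_pre)) a t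

theorem uCond_eq_sum (hPR : G.PerfectRecall) (γ : G.Profile) (μ : G.Belief) (hj : j < G.m i)
    (ha : a ∈ G.infoA i j) :
    G.uCond i j a γ μ = ∑ h ∈ G.Info i j, μ i j h * G.uExpFrom i γ (h ++ [a]) := by
  have hcover : G.Zset.filter (a ∈ ·) =
      (G.Info i j).biUnion fun h => G.Zset.filter (h ++ [a] <+: ·) := by
    ext z
    simp only [Finset.mem_biUnion, Finset.mem_filter]
    constructor
    · rintro ⟨hz, haz⟩
      obtain ⟨h, hh, h_pre⟩ := exists_mem_Info_of_mem hj ha (mem_H_of_mem_Zset hz) haz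
      exact ⟨h, hh, hz, h_pre⟩
    · rintro ⟨h, -, hz, h_pre⟩
      exact ⟨hz, h_pre.subset (by simp)⟩
  have hdisj : (G.Info i j : Set (List ℕ)).PairwiseDisjoint
      fun h => G.Zset.filter (h ++ [a] <+: ·) := by
    refine fun h hh h' hh' hne => Finset.disjoint_left.2 fun z hz hz' => hne ?_
    have hhz := (List.prefix_append h [a]).trans (Finset.mem_filter.1 hz).2
    have hhz' := (List.prefix_append h' [a]).trans (Finset.mem_filter.1 hz').2
    rcases List.prefix_or_prefix_of_prefix hhz hhz' with h_pre | h_pre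
    · exact hPR.eq_of_isPrefix hj hh hh' h_pre
    · exact (hPR.eq_of_isPrefix hj hh' hh h_pre).symm
  rw [uCond, hcover, Finset.sum_biUnion hdisj]
  refine Finset.sum_congr rfl fun h hh => ?_
  rw [uExpFrom, Finset.mul_sum]
  refine Finset.sum_congr rfl fun z hz => ?_
  obtain ⟨t, rfl⟩ := (Finset.mem_filter.1 hz).2
  rw [List.drop_left, ← List.append_cons, nu_append hPR γ μ hj hh]
  ring

theorem prodAlong_rho (β βt : G.Profile) (ha : a ∈ G.infoA i j) {pre rest : List ℕ}
    (hpre : a ∈ pre) (hH : pre ++ rest ∈ G.H) :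
    G.prodAlong (G.rho i j β βt) pre rest = G.prodAlong (G.replace β i (βt i)) pre rest := by
  induction rest generalizing pre with
  | nil => rfl
  | cons c rest ih =>
    rw [List.append_cons] at hH
    have hmove : G.moveProb (G.rho i j β βt) pre c =
        G.moveProb (G.replace β i (βt i)) pre c := by
      by_cases hP : G.P pre = some i
      · have hmem := (mem_Info_infoIdx hP (mem_H_of_isPrefix hH (List.prefix_append _ _))).2
        rw [moveProb_replace_of_eq β (βt i) hP]
        simp only [moveProb, hP, Option.elim_some, rho]
        rw [if_pos ⟨trivial, pre, hmem, a, hpre, ha⟩]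
      · rw [moveProb_replace_of_ne β (βt i) hP]
        cases hq : G.P pre with
        | none => simp [moveProb, hq]
        | some k =>
          have hki : k ≠ i := fun hki => hP (hki ▸ hq)
          simp [moveProb, rho, hq, hki]
    rw [prodAlong, prodAlong, hmove, ih (List.mem_append_left _ hpre) hH]

theorem uExpFrom_rho (β βt : G.Profile) (ha : a ∈ G.infoA i j) :
    G.uExpFrom i (G.rho i j β βt) (h ++ [a]) =
      G.uExpFrom i (G.replace β i (βt i)) (h ++ [a]) := by
  refine Finset.sum_congr rfl fun z hz => ?_
  obtain ⟨hzZ, t, rfl⟩ := Finset.mem_filter.1 hz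
  rw [List.drop_left, prodAlong_rho β βt ha (by simp) (mem_H_of_mem_Zset hzZ)]

theorem sum_Info_omega_replace_mul (hPR : G.PerfectRecall) (hμ : G.SelfIndep β μ)
    (b : ℕ → ℕ → ℝ) (βt : G.Profile) (hj : j < G.m i) :
    ∑ h ∈ G.Info i j, G.omega (G.replace β i b) h *
        ∑ a ∈ G.A h, (b j a - βt i j a) * G.uExpFrom i (G.replace β i (βt i)) (h ++ [a]) =
      G.omegaInfo i j (G.replace β i b) *
        ∑ a ∈ G.infoA i j, (b j a - βt i j a) * G.uCond i j a (G.rho i j β βt) μ := by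
  have hcond : ∀ a ∈ G.infoA i j, G.uCond i j a (G.rho i j β βt) μ =
      ∑ h ∈ G.Info i j, μ i j h * G.uExpFrom i (G.replace β i (βt i)) (h ++ [a]) := fun a ha => by
    simp only [uCond_eq_sum hPR _ μ hj ha, uExpFrom_rho β βt ha]
  calc
    _ = ∑ h ∈ G.Info i j, ∑ a ∈ G.infoA i j, G.omegaInfo i j (G.replace β i b) *
          ((b j a - βt i j a) *
            (μ i j h * G.uExpFrom i (G.replace β i (βt i)) (h ++ [a]))) := by
      refine Finset.sum_congr rfl fun h hh => ?_
      rw [← omegaInfo_replace_mul hPR hμ b hj hh, ← infoA_eq_A hj hh, Finset.mul_sum]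
      exact Finset.sum_congr rfl fun a _ => by ring
    _ = _ := by
      rw [Finset.sum_comm, Finset.mul_sum]
      refine Finset.sum_congr rfl fun a ha => ?_
      rw [hcond a ha, Finset.mul_sum, Finset.mul_sum]

theorem uExp_replace_sub_uExp_replace (hPR : G.PerfectRecall) (hμ : G.SelfIndep β μ)
    (i : Fin G.n) (b : ℕ → ℕ → ℝ) (βt : G.Profile) :
    G.uExp i (G.replace β i b) - G.uExp i (G.replace β i (βt i)) =
      ∑ j ∈ Finset.range (G.m i), G.omegaInfo i j (G.replace β i b) *
        (∑ a ∈ G.infoA i j, b j a * G.uCond i j a (G.rho i j β βt) μ -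
          ∑ a ∈ G.infoA i j, βt i j a * G.uCond i j a (G.rho i j β βt) μ) := by
  rw [uExp_sub_uExp, sum_H_eq_sum_Info i _ fun h _ hnot => ?_]
  · refine Finset.sum_congr rfl fun j hj => ?_
    replace hj := Finset.mem_range.1 hj
    simp only [← Finset.sum_sub_distrib, ← sub_mul]
    rw [← sum_Info_omega_replace_mul hPR hμ b βt hj]
    refine Finset.sum_congr rfl fun h hh => ?_
    obtain ⟨-, hP, -, rfl⟩ := (G.info_spec i j h hj).1 hh
    simp only [moveProb_replace_of_eq β _ hP]
  · refine mul_eq_zero_of_right _ (Finset.sum_eq_zero fun a ha => ?_)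
    have hP : G.P h ≠ some i := fun hP => hnot ⟨hP, a, mem_A.1 ha⟩
    rw [moveProb_replace_of_ne β b hP, moveProb_replace_of_ne β (βt i) hP, sub_self, zero_mul]

/-! ### Continuation strategies by backward induction -/

/-- The number of moves player `i` has made before reaching `I_i^j`, the rank of the backward
induction.  Perfect recall makes the supremum a common value, see `ownDepth_eq`. -/
def ownDepth (i : Fin G.n) (j : ℕ) : ℕ :=
  (G.Info i j).sup fun h => (G.recordFrom i [] h).length

/-- `Follows q p`: some history in the information set `q` contains an action of the information
set `p` of the same player, so that `ϱ` at `p` uses `β̃` at `q`. Indices `p` outside `M_i` are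
excluded, because `infoA` has no meaning there. -/
def Follows (q p : Fin G.n × ℕ) : Prop :=
  q.1 = p.1 ∧ p.2 < G.m p.1 ∧ ∃ h ∈ G.Info q.1 q.2, ∃ b ∈ h, b ∈ G.infoA p.1 p.2

theorem ownDepth_eq (hPR : G.PerfectRecall) (hj : j < G.m i) (hh : h ∈ G.Info i j) :
    ownDepth i j = (G.recordFrom i [] h).length :=
  le_antisymm (Finset.sup_le fun h' hh' => (congrArg List.length (hPR i j hj h' hh' h hh)).le)
    (Finset.le_sup (f := fun h => (G.recordFrom i [] h).length) hh)

theorem ownDepth_le (hj : j < G.m i) : ownDepth i j ≤ G.H.sup List.length :=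
  Finset.sup_le fun h hh => (length_recordFrom_le i [] h).trans
    (Finset.le_sup (f := List.length) ((G.info_spec i j h hj).1 hh).1)

theorem Follows.ownDepth_lt (hPR : G.PerfectRecall) {q p : Fin G.n × ℕ} (hqp : Follows q p)
    (hq : q.2 < G.m q.1) : ownDepth p.1 p.2 < ownDepth q.1 q.2 := by
  obtain ⟨i, k⟩ := q
  obtain ⟨i', j⟩ := p
  obtain ⟨rfl, hj, z, hz, a, haz, ha⟩ := hqp
  obtain ⟨h, hh, h_pre⟩ := exists_mem_Info_of_mem hj ha ((G.info_spec i k z hq).1 hz).1 haz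
  simp only at hj hq hh hz ⊢
  rw [ownDepth_eq hPR hj hh, ownDepth_eq hPR hq hz]
  exact length_recordFrom_lt ((G.info_spec i j h hj).1 hh).2.1 h_pre

theorem wellFounded_follows (hPR : G.PerfectRecall) :
    WellFounded (Follows : Fin G.n × ℕ → Fin G.n × ℕ → Prop) := by
  let rank : Fin G.n × ℕ → ℕ := fun p =>
    if p.2 < G.m p.1 then G.H.sup List.length + 1 - ownDepth p.1 p.2 else 0
  refine Subrelation.wf (r := InvImage (· < ·) rank) (fun {q p} hqp => ?_) (measure rank).wf
  have hp := hqp.2.1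
  have hple := ownDepth_le hp
  by_cases hq : q.2 < G.m q.1
  · have hqle := ownDepth_le hq
    have hlt := hqp.ownDepth_lt hPR hq
    simp only [InvImage, rank, if_pos hq, if_pos hp]
    omega
  · simp only [InvImage, rank, if_neg hq, if_pos hp]
    omega

theorem rho_congr {βt βt' : G.Profile} (hj : j < G.m i)
    (heq : ∀ k, Follows (i, k) (i, j) → βt i k = βt' i k) :
    G.rho i j β βt = G.rho i j β βt' := by
  funext p k
  unfold rho
  split_ifs with hk
  · exact heq k ⟨rfl, hj, hk.2⟩
  · rfl

/-- `β̃` is a best reply at every information set, given that play follows `ϱ(β, β̃)` afterwards and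
that the history reached is distributed according to `μ`. -/
def IsContinuationOptimal (β βt : G.Profile) (μ : G.Belief) : Prop :=
  ∀ (i : Fin G.n) (j : ℕ), j < G.m i →
    IsBestReply (G.infoA i j) (fun a => G.uCond i j a (G.rho i j β βt) μ) (βt i j)

theorem PerfectRecall.exists_isContinuationOptimal (hPR : G.PerfectRecall) (β : G.Profile)
    (μ : G.Belief) : ∃ βt : G.Profile, G.IsBehProfile βt ∧ IsContinuationOptimal β βt μ := by
  let Q (p : Fin G.n × ℕ) (f : Fin G.n × ℕ → ℕ → ℝ) (x : ℕ → ℝ) : Prop := p.2 < G.m p.1 →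
    IsProbOn (G.infoA p.1 p.2) x ∧ IsBestReply (G.infoA p.1 p.2)
      (fun a => G.uCond p.1 p.2 a (G.rho p.1 p.2 β (Function.curry f)) μ) x
  have hex : ∀ p f, ∃ x, Q p f x := by
    intro p f
    by_cases hp : p.2 < G.m p.1
    · exact (exists_isProbOn_isBestReply (infoA_nonempty hp) _).imp fun x hx _ => hx
    · exact ⟨0, fun h => absurd h hp⟩
  have hloc : ∀ p f g, (∀ q, Follows q p → f q = g q) → ∀ x, Q p f x → Q p g x := by
    intro p f g hfg x hx hp
    rw [← rho_congr (βt := Function.curry f) (βt' := Function.curry g) hp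
      fun k hk => hfg (p.1, k) hk]
    exact hx hp
  obtain ⟨f, hf⟩ := exists_forall_of_wellFounded (wellFounded_follows hPR) hex hloc
  exact ⟨Function.curry f, fun i j hj => (hf (i, j) hj).1, fun i j hj => (hf (i, j) hj).2⟩

/-! ### The equilibrium criterion -/

theorem IsContinuationOptimal.uExp_replace_le (hPR : G.PerfectRecall) (hβ : G.IsBehProfile β)
    (hμ : G.SelfIndep β μ) (hopt : IsContinuationOptimal β βt μ) {b : ℕ → ℕ → ℝ}
    (hb : G.IsBehStrategy i b) :
    G.uExp i (G.replace β i b) ≤ G.uExp i (G.replace β i (βt i)) := by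
  rw [← sub_nonpos, uExp_replace_sub_uExp_replace hPR hμ]
  refine Finset.sum_nonpos fun j hj => ?_
  replace hj := Finset.mem_range.1 hj
  exact mul_nonpos_of_nonneg_of_nonpos ((hβ.replace hb).omegaInfo_nonneg hj)
    (sub_nonpos.2 ((hopt i j hj).sum_mul_le (hb j hj)))

theorem IsContinuationOptimal.uExp_eq_iff (hPR : G.PerfectRecall) (hβ : G.IsBehProfile β)
    (hμ : G.SelfIndep β μ) (hopt : IsContinuationOptimal β βt μ) (i : Fin G.n) :
    G.uExp i β = G.uExp i (G.replace β i (βt i)) ↔ ∀ j < G.m i, G.omegaInfo i j β *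
      (∑ a ∈ G.infoA i j, β i j a * G.uCond i j a (G.rho i j β βt) μ -
        ∑ a ∈ G.infoA i j, βt i j a * G.uCond i j a (G.rho i j β βt) μ) = 0 := by
  have hdiff := uExp_replace_sub_uExp_replace hPR hμ i (β i) βt
  rw [replace_self] at hdiff
  rw [← sub_eq_zero, hdiff, Finset.sum_eq_zero_iff_of_nonpos fun j hj => ?_]
  · simp only [Finset.mem_range]
  · replace hj := Finset.mem_range.1 hj
    exact mul_nonpos_of_nonneg_of_nonpos (hβ.omegaInfo_nonneg hj)
      (sub_nonpos.2 ((hopt i j hj).sum_mul_le (hβ i j hj)))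

theorem IsContinuationOptimal.isNash_iff (hPR : G.PerfectRecall) (hβ : G.IsBehProfile β)
    (hβt : G.IsBehProfile βt) (hμ : G.SelfIndep β μ) (hopt : IsContinuationOptimal β βt μ) :
    G.IsNash β ↔ ∀ (i : Fin G.n) (j : ℕ), j < G.m i →
      IsBestReply (G.infoA i j)
        (fun a => G.omegaInfo i j β * G.uCond i j a (G.rho i j β βt) μ) (β i j) := by
  have hNash : G.IsNash β ↔ ∀ i, G.uExp i β = G.uExp i (G.replace β i (βt i)) := by
    refine ⟨fun h i => le_antisymm ?_ (h.2 i (βt i) (hβt i)), fun h => ⟨hβ, fun i b hb => ?_⟩⟩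
    · simpa only [replace_self] using hopt.uExp_replace_le hPR hβ hμ (hβ i)
    · exact (hopt.uExp_replace_le hPR hβ hμ hb).trans_eq (h i).symm
  rw [hNash]
  refine forall_congr' fun i => (hopt.uExp_eq_iff hPR hβ hμ i).trans ?_
  exact forall₂_congr fun j hj => ((hopt i j hj).isBestReply_smul_iff (hβt i j hj) (hβ i j hj)
    (hβ.omegaInfo_nonneg hj)).symm

end EFG

/-- Corollary 1: `β*` is a Nash equilibrium in behavioral strategies iff the polynomial
system (13), using conditional expected payoffs, is solvable. -/
theorem stmt7 (G : EFG) (hPR : G.PerfectRecall) (β : G.Profile) (hβ : G.IsBehProfile β) :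
    G.IsNash β ↔
      ∃ (βt : G.Profile) (μ : G.Belief) (lam lamt : Fin G.n → ℕ → ℕ → ℝ)
        (ze zet : Fin G.n → ℕ → ℝ),
        (∀ (i : Fin G.n) (j : ℕ), j < G.m i → ∀ a ∈ G.infoA i j,
          G.omegaInfo i j β * G.uCond i j a (G.rho i j β βt) μ + lam i j a - ze i j = 0) ∧
        (∀ (i : Fin G.n) (j : ℕ), j < G.m i → ∀ a ∈ G.infoA i j,
          G.uCond i j a (G.rho i j β βt) μ + lamt i j a - zet i j = 0) ∧
        (∀ (i : Fin G.n) (j : ℕ), j < G.m i → ∀ h ∈ G.Info i j,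
          G.SInfo i j β * μ i j h = G.Sh i β h ∧ 0 ≤ μ i j h) ∧
        (∀ (i : Fin G.n) (j : ℕ), j < G.m i →
          (∑ h ∈ G.Info i j, μ i j h = 1) ∧ (∑ a ∈ G.infoA i j, β i j a = 1) ∧
          (∑ a ∈ G.infoA i j, βt i j a = 1)) ∧
        (∀ (i : Fin G.n) (j : ℕ), j < G.m i → ∀ a ∈ G.infoA i j,
          β i j a * lam i j a = 0 ∧ βt i j a * lamt i j a = 0 ∧
          0 ≤ β i j a ∧ 0 ≤ lam i j a ∧ 0 ≤ βt i j a ∧ 0 ≤ lamt i j a) := by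
  constructor
  · intro hN
    obtain ⟨μ, hμ, hself⟩ := hβ.exists_belief
    obtain ⟨βt, hβt, hopt⟩ := hPR.exists_isContinuationOptimal β μ
    have hbest := (hopt.isNash_iff hPR hβ hβt hself).1 hN
    choose! lam ze hlam hslack using fun i j hj =>
      (isBestReply_iff_exists_multiplier (hβ i j hj)).1 (hbest i j hj)
    choose! lamt zet hlamt hslackt using fun i j hj =>
      (isBestReply_iff_exists_multiplier (hβt i j hj)).1 (hopt i j hj)
    exact ⟨βt, μ, lam, lamt, ze, zet, hlam, hlamt,
      fun i j hj h hh => ⟨hself i j hj h hh, (hμ i j hj).1 h hh⟩,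
      fun i j hj => ⟨(hμ i j hj).2, (hβ i j hj).2, (hβt i j hj).2⟩,
      fun i j hj a ha => ⟨(hslack i j hj a ha).1, (hslackt i j hj a ha).1, (hβ i j hj).1 a ha,
        (hslack i j hj a ha).2, (hβt i j hj).1 a ha, (hslackt i j hj a ha).2⟩⟩
  · rintro ⟨βt, μ, lam, lamt, ze, zet, hlam, hlamt, hself, hsum, hslack⟩
    have hβt : G.IsBehProfile βt := fun i j hj =>
      ⟨fun a ha => (hslack i j hj a ha).2.2.2.2.1, (hsum i j hj).2.2⟩
    have hopt : EFG.IsContinuationOptimal β βt μ := fun i j hj =>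
      (isBestReply_iff_exists_multiplier (hβt i j hj)).2 ⟨lamt i j, zet i j, hlamt i j hj,
        fun a ha => ⟨(hslack i j hj a ha).2.1, (hslack i j hj a ha).2.2.2.2.2⟩⟩
    exact (hopt.isNash_iff hPR hβ hβt fun i j hj h hh => (hself i j hj h hh).1).2 fun i j hj =>
      (isBestReply_iff_exists_multiplier (hβ i j hj)).2 ⟨lam i j, ze i j, hlam i j hj,
        fun a ha => ⟨(hslack i j hj a ha).1, (hslack i j hj a ha).2.2.2.1⟩⟩
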